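/- arXiv:1905.02387 — 2 statements merged into one kernel-verified Lean document; each statement's English description precedes it below -/
import Mathlib

section
/- Let π be a king permutation and let C(π) be the set of king permutations σ with σ ≺ π such that there is no king permutation δ with σ ≺ δ ≺ π. If there is exactly one σ ∈ C(π) such that both [3142] ≺ σ and [2413] ≺ σ, then μ(π) = 0. -/
/-!
A sequence that avoids `3142` and whose minimum comes before its maximum is a direct sum: cut it at
the largest value occurring up to the position of the minimum. Negating the values, a sequence that
avoids `2413` and whose maximum comes before its minimum is a skew sum. Hence a sequence avoiding
both patterns splits again and again into blocks, down to a block of two entries, which a king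
permutation does not have: every king permutation of length at least two contains `3142` or `2413`.

If `[1] ≺ σ ≺ π` and `μ` vanishes at all kings below `π` not contained in `σ`, then `μ(π)`
is minus the sum of `μ` over all kings contained in `σ`, which is zero. Applied to `σ = 3142`
and `σ = 2413`, this shows by induction that `μ` vanishes at every king of length at least five
avoiding `2413` or `3142`. Applied to the unique cover `σ` containing both patterns, it gives the
theorem: a king below `π` that contains both patterns properly lies below a cover with the
same property, and that cover is `σ`.
-/

open Equiv

/-- The Manhattan distance between two elements of `Fin n`. -/
def fdist {n : ℕ} (a b : Fin n) : ℕ := ((a : ℤ) - (b : ℤ)).natAbs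

/-- A king permutation: no two adjacent positions carry adjacent values. -/
def IsKing {n : ℕ} (σ : Equiv.Perm (Fin n)) : Prop :=
  ∀ i j : Fin n, (j : ℕ) = (i : ℕ) + 1 → fdist (σ i) (σ j) ≠ 1

/-- Pattern containment `π ⪯ σ`. -/
def Contains {m n : ℕ} (π : Equiv.Perm (Fin m)) (σ : Equiv.Perm (Fin n)) : Prop :=
  ∃ f : Fin m ↪o Fin n, ∀ a b : Fin m, π a < π b ↔ σ (f a) < σ (f b)

/-- Strict pattern containment `π ≺ σ`. -/
def StrictContains {m n : ℕ} (π : Equiv.Perm (Fin m)) (σ : Equiv.Perm (Fin n)) : Prop :=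
  Contains π σ ∧ m < n

/-- `nabla σ i` deletes the `i`-th entry of `σ` and standardizes. -/
def nabla {n : ℕ} (σ : Equiv.Perm (Fin (n + 1))) (i : Fin (n + 1)) : Equiv.Perm (Fin n) :=
  Equiv.removeNone ((finSuccEquiv' i).symm.trans (σ.trans (finSuccEquiv' (σ i))))

/-- `nablaStar σ a` deletes the value `a` from `σ` and standardizes. -/
def nablaStar {n : ℕ} (σ : Equiv.Perm (Fin (n + 1))) (a : Fin (n + 1)) : Equiv.Perm (Fin n) :=
  nabla σ (σ⁻¹ a)

/-- The permutation [2413] (0-based one-line notation [1,3,0,2]). -/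
def p2413 : Equiv.Perm (Fin 4) :=
  ⟨![1, 3, 0, 2], ![2, 0, 3, 1], by intro x; fin_cases x <;> rfl, by intro x; fin_cases x <;> rfl⟩

/-- The permutation [3142] (0-based one-line notation [2,0,3,1]). -/
def p3142 : Equiv.Perm (Fin 4) :=
  ⟨![2, 0, 3, 1], ![1, 3, 0, 2], by intro x; fin_cases x <;> rfl, by intro x; fin_cases x <;> rfl⟩

/-- `σ i` vertically separates `σ j` from `σ k`. -/
def VSep {n : ℕ} (σ : Equiv.Perm (Fin n)) (i j k : Fin n) : Prop :=
  i ≠ j ∧ i ≠ k ∧ j ≠ k ∧ fdist i j = 1 ∧ fdist i k = 1 ∧ fdist (σ j) (σ k) = 1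

/-- `σ i` horizontally separates `σ j` from `σ k`. -/
def HSep {n : ℕ} (σ : Equiv.Perm (Fin n)) (i j k : Fin n) : Prop :=
  i ≠ j ∧ i ≠ k ∧ j ≠ k ∧ fdist (σ i) (σ j) = 1 ∧ fdist (σ i) (σ k) = 1 ∧ fdist j k = 1

/-- `σ i` separates `σ j` from `σ k`. -/
def Separates {n : ℕ} (σ : Equiv.Perm (Fin n)) (i j k : Fin n) : Prop :=
  VSep σ i j k ∨ HSep σ i j k

/-- `π` has a 2-block at positions `j`, `j+1` (0-based). -/
def HasTwoBlockAt {n : ℕ} (π : Equiv.Perm (Fin n)) (j : ℕ) : Prop :=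
  ∃ hj : j + 1 < n, fdist (π ⟨j, by omega⟩) (π ⟨j + 1, hj⟩) = 1

/-- `π` has a 3-block at positions `p`, `p+1`, `p+2` (0-based). -/
def HasThreeBlockAt {n : ℕ} (π : Equiv.Perm (Fin n)) (p : ℕ) : Prop :=
  ∃ hp : p + 2 < n, ∃ m : ℕ,
    ({(π ⟨p, by omega⟩ : ℕ), (π ⟨p + 1, by omega⟩ : ℕ), (π ⟨p + 2, by omega⟩ : ℕ)} : Finset ℕ)
      = {m, m + 1, m + 2}

open scoped Classical in
/-- The Möbius function of the poset of king permutations: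
`μ([1]) = 1` and, for longer kings, `μ(σ) = -∑ μ(τ)` over all king permutations `τ ≺ σ`. -/
noncomputable def kingMu : (n : ℕ) → Equiv.Perm (Fin n) → ℤ
  | 0, _ => 1
  | 1, _ => 1
  | n + 2, σ =>
    - ∑ l ∈ (Finset.Ico 1 (n + 2)).attach,
        ∑ τ ∈ Finset.univ.filter
            (fun τ : Equiv.Perm (Fin l.1) => IsKing τ ∧ StrictContains τ σ),
          kingMu l.1 τ
termination_by n _ => n
decreasing_by
  have := l.2
  simp only [Finset.mem_Ico] at this
  omega

section Blocks

variable {ι α : Type*} [LinearOrder ι] [LinearOrder α] {f : ι → α} {r s t u : Finset ι}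

/-- The sequence `f` has no entries in the relative order of the pattern `3142`. Avoidance of `2413`
is expressed as `Avoids3142 (toDual ∘ f)`. -/
def Avoids3142 (f : ι → α) : Prop :=
  ∀ ⦃i j k l : ι⦄, i < j → j < k → k < l → ¬ (f j < f l ∧ f l < f i ∧ f i < f k)

/-- The positions `t` form a block (also called an interval) of the sequence `f` restricted to the
positions `s`: no entry of `s` outside `t` separates two entries of `t`, by position or by value. -/
def IsBlock (f : ι → α) (t s : Finset ι) : Prop :=
  t ⊆ s ∧ ∀ k ∈ s, k ∉ t → ∀ i ∈ t, ∀ j ∈ t, (k < i ↔ k < j) ∧ (f k < f i ↔ f k < f j)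

theorem IsBlock.refl (f : ι → α) (s : Finset ι) : IsBlock f s s :=
  ⟨subset_rfl, fun _ hk hk' => absurd hk hk'⟩

theorem IsBlock.trans (hrt : IsBlock f r t) (hts : IsBlock f t s) : IsBlock f r s := by
  refine ⟨hrt.1.trans hts.1, fun k hks hkr i hi j hj => ?_⟩
  by_cases hkt : k ∈ t
  · exact hrt.2 k hkt hkr i hi j hj
  · exact hts.2 k hks hkt i (hrt.1 hi) j (hrt.1 hj)

theorem isBlock_left_of_split (hpos : ∀ i ∈ t, ∀ j ∈ u, i < j)
    (hval : (∀ i ∈ t, ∀ j ∈ u, f i < f j) ∨ ∀ i ∈ t, ∀ j ∈ u, f j < f i) :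
    IsBlock f t (t ∪ u) := by
  refine ⟨Finset.subset_union_left, fun k hk hkt i hi j hj => ?_⟩
  have hku : k ∈ u := (Finset.mem_union.1 hk).resolve_left hkt
  refine ⟨iff_of_false (hpos i hi k hku).not_gt (hpos j hj k hku).not_gt, ?_⟩
  rcases hval with hlt | hgt
  · exact iff_of_false (hlt i hi k hku).not_gt (hlt j hj k hku).not_gt
  · exact iff_of_true (hgt i hi k hku) (hgt j hj k hku)

theorem isBlock_right_of_split (hpos : ∀ i ∈ t, ∀ j ∈ u, i < j)
    (hval : (∀ i ∈ t, ∀ j ∈ u, f i < f j) ∨ ∀ i ∈ t, ∀ j ∈ u, f j < f i) :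
    IsBlock f u (t ∪ u) := by
  refine ⟨Finset.subset_union_right, fun k hk hku i hi j hj => ?_⟩
  have hkt : k ∈ t := (Finset.mem_union.1 hk).resolve_right hku
  refine ⟨iff_of_true (hpos k hkt i hi) (hpos k hkt j hj), ?_⟩
  rcases hval with hlt | hgt
  · exact iff_of_true (hlt k hkt i hi) (hlt k hkt j hj)
  · exact iff_of_false (hgt k hkt i hi).not_gt (hgt k hkt j hj).not_gt

theorem Avoids3142.exists_sum_cut (h : Avoids3142 f) (hf : Function.Injective f) {m M : ι}
    (hms : m ∈ s) (hmM : m < M) (hmin : ∀ i ∈ s, f m ≤ f i) (hmax : ∀ i ∈ s, f i ≤ f M) :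
    ∃ c ∈ s, f c < f M ∧ ∀ i ∈ s, ∀ j ∈ s, f i ≤ f c → f c < f j → i < j := by
  obtain ⟨c, hc, hc_max⟩ := (s.filter (· ≤ m)).exists_max_image f ⟨m, by simp [hms]⟩
  obtain ⟨hcs, hcm⟩ := Finset.mem_filter.1 hc
  refine ⟨c, hcs, (hmax c hcs).lt_of_ne (hf.ne (hcm.trans_lt hmM).ne), ?_⟩
  intro i hi j hj hic hcj
  by_contra! hji
  have hji : j < i := hji.lt_of_ne (by rintro rfl; exact hic.not_gt hcj)
  have hmj : m < j := by
    by_contra! hjm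
    exact (hc_max j (Finset.mem_filter.2 ⟨hj, hjm⟩)).not_gt hcj
  have hmi : f m < f i := (hmin i hi).lt_of_ne (hf.ne (hmj.trans hji).ne)
  have hic : f i < f c := hic.lt_of_ne (hf.ne (hcm.trans_lt (hmj.trans hji)).ne')
  have hcm : c < m := hcm.lt_of_ne (by rintro rfl; exact lt_asymm hmi hic)
  exact h hcm hmj hji ⟨hmi, hic, hcj⟩

theorem Avoids3142.exists_sum_split (h : Avoids3142 f) (hf : Function.Injective f) {m M : ι}
    (hms : m ∈ s) (hMs : M ∈ s) (hmM : m < M)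
    (hmin : ∀ i ∈ s, f m ≤ f i) (hmax : ∀ i ∈ s, f i ≤ f M) :
    ∃ t u : Finset ι, t.Nonempty ∧ u.Nonempty ∧ t ∪ u = s ∧
      (∀ i ∈ t, ∀ j ∈ u, i < j) ∧ ∀ i ∈ t, ∀ j ∈ u, f i < f j := by
  obtain ⟨c, hcs, hcM, hcut⟩ := h.exists_sum_cut hf hms hmM hmin hmax
  refine ⟨s.filter (f · ≤ f c), s.filter (¬ f · ≤ f c), ⟨c, by simp [hcs]⟩,
    ⟨M, by simp [hMs, hcM]⟩, Finset.filter_union_filter_not_eq _ s, ?_, ?_⟩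
  all_goals
    simp only [Finset.mem_filter, not_le]
    rintro i ⟨hi, hic⟩ j ⟨hj, hcj⟩
  · exact hcut i hi j hj hic hcj
  · exact hic.trans_lt hcj

theorem exists_split (h3142 : Avoids3142 f) (h2413 : Avoids3142 (OrderDual.toDual ∘ f))
    (hf : Function.Injective f) (hs : s.Nontrivial) :
    ∃ t u : Finset ι, t.Nonempty ∧ u.Nonempty ∧ t ∪ u = s ∧ (∀ i ∈ t, ∀ j ∈ u, i < j) ∧
      ((∀ i ∈ t, ∀ j ∈ u, f i < f j) ∨ ∀ i ∈ t, ∀ j ∈ u, f j < f i) := by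
  obtain ⟨m, hms, hmin⟩ := s.exists_min_image f hs.nonempty
  obtain ⟨M, hMs, hmax⟩ := s.exists_max_image f hs.nonempty
  have hne : m ≠ M := by
    rintro rfl
    obtain ⟨i, hi, him⟩ := hs.exists_ne m
    exact him (hf ((hmax i hi).antisymm (hmin i hi)))
  rcases hne.lt_or_gt with hmM | hMm
  · obtain ⟨t, u, ht, hu, htu, hpos, hval⟩ := h3142.exists_sum_split hf hms hMs hmM hmin hmax
    exact ⟨t, u, ht, hu, htu, hpos, .inl hval⟩
  · obtain ⟨t, u, ht, hu, htu, hpos, hval⟩ :=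
      h2413.exists_sum_split (OrderDual.toDual.injective.comp hf) hMs hms hMm hmax hmin
    exact ⟨t, u, ht, hu, htu, hpos, .inr hval⟩

theorem exists_pair_isBlock (h3142 : Avoids3142 f) (h2413 : Avoids3142 (OrderDual.toDual ∘ f))
    (hf : Function.Injective f) (hs : s.Nontrivial) : ∃ i j, i < j ∧ IsBlock f {i, j} s := by
  induction s using Finset.strongInduction with
  | H s ih =>
    obtain ⟨t, u, ht, hu, rfl, hpos, hval⟩ := exists_split h3142 h2413 hf hs
    rcases ht.exists_eq_singleton_or_nontrivial with ⟨i, rfl⟩ | ht_nontrivial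
    · rcases hu.exists_eq_singleton_or_nontrivial with ⟨j, rfl⟩ | hu_nontrivial
      · exact ⟨i, j, hpos i (by simp) j (by simp), IsBlock.refl f _⟩
      · have hss : u ⊂ {i} ∪ u :=
          right_lt_sup.2 fun hiu => lt_irrefl i (hpos i (by simp) i (hiu (by simp)))
        obtain ⟨k, l, hkl, hblock⟩ := ih u hss hu_nontrivial
        exact ⟨k, l, hkl, hblock.trans (isBlock_right_of_split hpos hval)⟩
    · obtain ⟨j, hj⟩ := hu
      have hss : t ⊂ t ∪ u := left_lt_sup.2 fun hut => lt_irrefl j (hpos j (hut hj) j hj)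
      obtain ⟨k, l, hkl, hblock⟩ := ih t hss ht_nontrivial
      exact ⟨k, l, hkl, hblock.trans (isBlock_left_of_split hpos hval)⟩

end Blocks

theorem fdist_eq_one_iff {n : ℕ} {a b : Fin n} : fdist a b = 1 ↔ a ⋖ b ∨ b ⋖ a := by
  rw [Fin.covBy_iff, Fin.covBy_iff, Nat.covBy_iff_add_one_eq,
    Nat.covBy_iff_add_one_eq, fdist]
  omega

theorem not_isKing_of_isBlock_pair {n : ℕ} {σ : Equiv.Perm (Fin n)} {i j : Fin n} (hij : i < j)
    (h : IsBlock σ {i, j} Finset.univ) : ¬ IsKing σ := by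
  have hsep : ∀ k, k ≠ i → k ≠ j → (k < i ↔ k < j) ∧ (σ k < σ i ↔ σ k < σ j) := fun k hki hkj =>
    h.2 k (Finset.mem_univ k) (by simp [hki, hkj]) i (by simp) j (by simp)
  have hpos : i ⋖ j :=
    ⟨hij, fun k hik hkj => hik.not_gt ((hsep k hik.ne' hkj.ne).1.2 hkj)⟩
  have hval : σ i ⋖ σ j ∨ σ j ⋖ σ i := by
    have hsep' : ∀ v, v ≠ σ i → v ≠ σ j → (v < σ i ↔ v < σ j) := by
      intro v hvi hvj
      simpa using (hsep (σ.symm v) (by simpa [Equiv.symm_apply_eq] using hvi)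
        (by simpa [Equiv.symm_apply_eq] using hvj)).2
    rcases (σ.injective.ne hij.ne).lt_or_gt with hlt | hgt
    · exact .inl ⟨hlt, fun v hiv hvj => hiv.not_gt ((hsep' v hiv.ne' hvj.ne).2 hvj)⟩
    · exact .inr ⟨hgt, fun v hjv hvi => hjv.not_gt ((hsep' v hvi.ne hjv.ne').1 hvi)⟩
  have hsucc : (j : ℕ) = i + 1 := (Nat.covBy_iff_add_one_eq.1 (Fin.covBy_iff.1 hpos)).symm
  exact fun hσ => hσ i j hsucc (fdist_eq_one_iff.2 hval)

section Containment

variable {k m n : ℕ} {ρ : Equiv.Perm (Fin k)} {π : Equiv.Perm (Fin m)} {σ : Equiv.Perm (Fin n)}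

theorem contains_iff_exists_strictMono :
    Contains π σ ↔ ∃ f : Fin m → Fin n, StrictMono f ∧ StrictMono (σ ∘ f ∘ π.symm) := by
  constructor
  · rintro ⟨f, hf⟩
    exact ⟨f, f.strictMono, fun a b hab => (hf _ _).1 (by simpa using hab)⟩
  · rintro ⟨f, hf, hσf⟩
    exact ⟨OrderEmbedding.ofStrictMono f hf, fun a b => by
      simpa using (hσf.lt_iff_lt (a := π a) (b := π b)).symm⟩

theorem Contains.refl (π : Equiv.Perm (Fin m)) : Contains π π :=
  ⟨RelEmbedding.refl _, fun _ _ => Iff.rfl⟩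

theorem Contains.trans (hρπ : Contains ρ π) (hπσ : Contains π σ) : Contains ρ σ := by
  obtain ⟨f, hf⟩ := hρπ
  obtain ⟨g, hg⟩ := hπσ
  exact ⟨f.trans g, fun a b => (hf a b).trans (hg _ _)⟩

theorem Contains.length_le (h : Contains π σ) : m ≤ n := by
  obtain ⟨f, -⟩ := h
  simpa using Fintype.card_le_of_embedding f.toEmbedding

theorem Contains.eq {π σ : Equiv.Perm (Fin n)} (h : Contains π σ) : π = σ := by
  obtain ⟨f, hf, hσf⟩ := contains_iff_exists_strictMono.1 h
  ext i
  have hσπ : σ (f (π.symm (π i))) = π i := congrFun hσf.eq_id (π i)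
  rw [hf.eq_id, Equiv.symm_apply_apply, id] at hσπ
  rw [hσπ]

theorem Contains.symm_of_length_le (h : Contains π σ) (hnm : n ≤ m) : Contains σ π := by
  obtain rfl := h.length_le.antisymm hnm
  exact h.eq ▸ Contains.refl π

theorem contains_of_length_one (π : Equiv.Perm (Fin 1)) (σ : Equiv.Perm (Fin n)) (hn : 1 ≤ n) :
    Contains π σ :=
  contains_iff_exists_strictMono.2
    ⟨fun _ => ⟨0, hn⟩, Subsingleton.strictMono _, Subsingleton.strictMono _⟩

theorem contains_p3142 {i j k l : Fin n} (hij : i < j) (hjk : j < k) (hkl : k < l)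
    (hjl : σ j < σ l) (hli : σ l < σ i) (hik : σ i < σ k) : Contains p3142 σ := by
  refine contains_iff_exists_strictMono.2 ⟨![i, j, k, l], by simp [hij, hjk, hkl], ?_⟩
  have hvalues : σ ∘ ![i, j, k, l] ∘ p3142.symm = ![σ j, σ l, σ i, σ k] := by
    ext a; fin_cases a <;> rfl
  simp [hvalues, hjl, hli, hik]

theorem contains_p2413 {i j k l : Fin n} (hij : i < j) (hjk : j < k) (hkl : k < l)
    (hki : σ k < σ i) (hil : σ i < σ l) (hlj : σ l < σ j) : Contains p2413 σ := by
  refine contains_iff_exists_strictMono.2 ⟨![i, j, k, l], by simp [hij, hjk, hkl], ?_⟩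
  have hvalues : σ ∘ ![i, j, k, l] ∘ p2413.symm = ![σ k, σ i, σ l, σ j] := by
    ext a; fin_cases a <;> rfl
  simp [hvalues, hki, hil, hlj]

end Containment

theorem isKing_p3142 : IsKing p3142 := by
  unfold IsKing fdist
  decide

theorem isKing_p2413 : IsKing p2413 := by
  unfold IsKing fdist
  decide

theorem IsKing.contains_p3142_or_contains_p2413 {n : ℕ} {σ : Equiv.Perm (Fin n)} (hσ : IsKing σ)
    (hn : 2 ≤ n) : Contains p3142 σ ∨ Contains p2413 σ := by
  by_contra! hcon
  have h3142 : Avoids3142 σ := fun i j k l hij hjk hkl ⟨hjl, hli, hik⟩ =>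
    hcon.1 (contains_p3142 hij hjk hkl hjl hli hik)
  have h2413 : Avoids3142 (OrderDual.toDual ∘ σ) := fun i j k l hij hjk hkl ⟨hlj, hil, hki⟩ =>
    hcon.2 (contains_p2413 hij hjk hkl hki hil hlj)
  have huniv : (Finset.univ : Finset (Fin n)).Nontrivial :=
    Finset.one_lt_card_iff_nontrivial.1 (by rwa [Finset.card_fin])
  obtain ⟨i, j, hij, hblock⟩ := exists_pair_isBlock h3142 h2413 σ.injective huniv
  exact not_isKing_of_isBlock_pair hij hblock hσ

section Moebius

variable {a b m n : ℕ}

open scoped Classical in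
/-- The nonempty king permutations contained in `π`, each paired with its length. -/
noncomputable def kingsLE (π : Equiv.Perm (Fin n)) : Finset (Σ l, Equiv.Perm (Fin l)) :=
  (Finset.Icc 1 n).sigma fun _ => {τ | IsKing τ ∧ Contains τ π}

open scoped Classical in
/-- The nonempty king permutations strictly contained in `π`, each paired with its length. -/
noncomputable def kingsLT (π : Equiv.Perm (Fin n)) : Finset (Σ l, Equiv.Perm (Fin l)) :=
  (Finset.Ico 1 n).sigma fun _ => {τ | IsKing τ ∧ StrictContains τ π}

theorem mem_kingsLE {π : Equiv.Perm (Fin n)} {τ : Σ l, Equiv.Perm (Fin l)} :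
    τ ∈ kingsLE π ↔ 1 ≤ τ.1 ∧ IsKing τ.2 ∧ Contains τ.2 π := by
  simp only [kingsLE, Finset.mem_sigma, Finset.mem_Icc, Finset.mem_filter_univ]
  exact ⟨fun h => ⟨h.1.1, h.2⟩, fun h => ⟨⟨h.1, h.2.2.length_le⟩, h.2⟩⟩

theorem mem_kingsLT {π : Equiv.Perm (Fin n)} {τ : Σ l, Equiv.Perm (Fin l)} :
    τ ∈ kingsLT π ↔ 1 ≤ τ.1 ∧ IsKing τ.2 ∧ StrictContains τ.2 π := by
  simp only [kingsLT, Finset.mem_sigma, Finset.mem_Ico, Finset.mem_filter_univ]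
  exact ⟨fun h => ⟨h.1.1, h.2⟩, fun h => ⟨⟨h.1, h.2.2.2⟩, h.2⟩⟩

theorem kingsLE_eq_insert {π : Equiv.Perm (Fin n)} (hπ : IsKing π) (hn : 1 ≤ n) :
    kingsLE π = insert ⟨n, π⟩ (kingsLT π) := by
  ext ⟨l, τ⟩
  simp only [mem_kingsLE, Finset.mem_insert, mem_kingsLT]
  constructor
  · rintro ⟨hl, hτ, hτπ⟩
    rcases hτπ.length_le.eq_or_lt with rfl | hln
    · exact .inl (by rw [hτπ.eq])
    · exact .inr ⟨hl, hτ, hτπ, hln⟩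
  · rintro (heq | ⟨hl, hτ, hτπ, -⟩)
    · cases heq
      exact ⟨hn, hπ, Contains.refl π⟩
    · exact ⟨hl, hτ, hτπ⟩

theorem kingsLE_subset_kingsLT {σ : Equiv.Perm (Fin m)} {π : Equiv.Perm (Fin n)}
    (hσπ : StrictContains σ π) : kingsLE σ ⊆ kingsLT π := by
  intro τ hτ
  rw [mem_kingsLE] at hτ
  exact mem_kingsLT.2 ⟨hτ.1, hτ.2.1, hτ.2.2.trans hσπ.1, hτ.2.2.length_le.trans_lt hσπ.2⟩

theorem kingMu_eq_neg_sum_kingsLT (π : Equiv.Perm (Fin n)) (hn : 2 ≤ n) :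
    kingMu n π = -∑ τ ∈ kingsLT π, kingMu τ.1 τ.2 := by
  obtain ⟨n, rfl⟩ := Nat.exists_eq_add_of_le' hn
  rw [kingMu, kingsLT, Finset.sum_sigma, ← Finset.sum_attach (Finset.Ico 1 (n + 2))]

theorem sum_kingMu_kingsLE {π : Equiv.Perm (Fin n)} (hπ : IsKing π) (hn : 2 ≤ n) :
    ∑ τ ∈ kingsLE π, kingMu τ.1 τ.2 = 0 := by
  classical
  have hπ_notMem : ⟨n, π⟩ ∉ kingsLT π := fun h => (mem_kingsLT.1 h).2.2.2.false
  rw [kingsLE_eq_insert hπ (by lia), Finset.sum_insert hπ_notMem,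
    kingMu_eq_neg_sum_kingsLT π hn, neg_add_cancel]

theorem kingMu_eq_zero_of_forall_not_contains {σ : Equiv.Perm (Fin m)} {π : Equiv.Perm (Fin n)}
    (hσ : IsKing σ) (hm : 2 ≤ m) (hσπ : StrictContains σ π)
    (h : ∀ τ ∈ kingsLT π, ¬ Contains τ.2 σ → kingMu τ.1 τ.2 = 0) : kingMu n π = 0 := by
  have hsum : ∑ τ ∈ kingsLE σ, kingMu τ.1 τ.2 = ∑ τ ∈ kingsLT π, kingMu τ.1 τ.2 :=
    Finset.sum_subset (kingsLE_subset_kingsLT hσπ) fun τ hτπ hτσ => h τ hτπ fun hc =>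
      hτσ (mem_kingsLE.2 ⟨(mem_kingsLT.1 hτπ).1, (mem_kingsLT.1 hτπ).2.1, hc⟩)
  rw [kingMu_eq_neg_sum_kingsLT π (hm.trans hσπ.2.le), ← hsum, sum_kingMu_kingsLE hσ hm, neg_zero]

theorem two_le_of_not_contains {τ : Equiv.Perm (Fin n)} {σ : Equiv.Perm (Fin m)} (hn : 1 ≤ n)
    (hm : 1 ≤ m) (h : ¬ Contains τ σ) : 2 ≤ n := by
  by_contra! hlt
  obtain rfl : n = 1 := by lia
  exact h (contains_of_length_one τ σ hm)

theorem kingMu_eq_zero_of_not_contains {p : Equiv.Perm (Fin a)} {q : Equiv.Perm (Fin b)}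
    (hq : IsKing q) (hb : 2 ≤ b)
    (hpq : ∀ {l : ℕ} {ρ : Equiv.Perm (Fin l)}, IsKing ρ → 2 ≤ l → Contains p ρ ∨ Contains q ρ)
    {τ : Equiv.Perm (Fin n)} (hτ : IsKing τ) (hbn : b < n) (hpτ : ¬ Contains p τ) :
    kingMu n τ = 0 := by
  induction n using Nat.strong_induction_on with
  | _ n ih =>
    have hqτ : Contains q τ := (hpq hτ (by lia)).resolve_left hpτ
    refine kingMu_eq_zero_of_forall_not_contains hq hb ⟨hqτ, hbn⟩ fun ⟨l, ρ⟩ hρτ hρq => ?_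
    obtain ⟨hl, hρ, hρτ⟩ := mem_kingsLT.1 hρτ
    have hpρ : ¬ Contains p ρ := fun hpρ => hpτ (hpρ.trans hρτ.1)
    have hqρ : Contains q ρ :=
      (hpq hρ (two_le_of_not_contains hl (by lia) hρq)).resolve_left hpρ
    have hbl : b < l := by
      by_contra! hlb
      exact hρq (hqρ.symm_of_length_le hlb)
    exact ih l hρτ.2 hρ hbl hpρ

theorem IsKing.four_lt_of_not_contains {τ : Equiv.Perm (Fin n)} {σ : Equiv.Perm (Fin m)}
    (hτ : IsKing τ) (hn : 1 ≤ n) (h3142 : Contains p3142 σ) (h2413 : Contains p2413 σ)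
    (hτσ : ¬ Contains τ σ) : 4 < n := by
  have hm : 4 ≤ m := h3142.length_le
  by_contra! hn4
  rcases hτ.contains_p3142_or_contains_p2413 (two_le_of_not_contains hn (by lia) hτσ) with h | h
  · exact hτσ ((h.symm_of_length_le hn4).trans h3142)
  · exact hτσ ((h.symm_of_length_le hn4).trans h2413)

theorem contains_p3142_and_contains_p2413_of_kingMu_ne_zero {τ : Equiv.Perm (Fin n)}
    (hτ : IsKing τ) (hn : 4 < n) (hμ : kingMu n τ ≠ 0) : Contains p3142 τ ∧ Contains p2413 τ := by
  constructor <;> by_contra h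
  · exact hμ (kingMu_eq_zero_of_not_contains isKing_p2413 (by norm_num)
      IsKing.contains_p3142_or_contains_p2413 hτ hn h)
  · exact hμ (kingMu_eq_zero_of_not_contains isKing_p3142 (by norm_num)
      (fun hρ hl => (hρ.contains_p3142_or_contains_p2413 hl).symm) hτ hn h)

/-- `σ` is maximal among the king permutations strictly contained in `π`; when `π` is itself a king
permutation, this is `σ ∈ C(π)`. -/
def IsMaximalKingBelow (σ : Equiv.Perm (Fin m)) (π : Equiv.Perm (Fin n)) : Prop :=
  IsKing σ ∧ StrictContains σ π ∧
    ¬ ∃ (l : ℕ) (δ : Equiv.Perm (Fin l)), IsKing δ ∧ StrictContains σ δ ∧ StrictContains δ π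

theorem exists_isMaximalKingBelow {π : Equiv.Perm (Fin n)} {τ : Σ l, Equiv.Perm (Fin l)}
    (hτ : τ ∈ kingsLT π) :
    ∃ δ : Σ l, Equiv.Perm (Fin l), IsMaximalKingBelow δ.2 π ∧ Contains τ.2 δ.2 := by
  classical
  obtain ⟨δ, hδ, hmax⟩ := ((kingsLT π).filter (Contains τ.2 ·.2)).exists_max_image Sigma.fst
    ⟨τ, Finset.mem_filter.2 ⟨hτ, Contains.refl τ.2⟩⟩
  obtain ⟨hδπ, hτδ⟩ := Finset.mem_filter.1 hδ
  obtain ⟨hδ1, hδ_king, hδπ⟩ := mem_kingsLT.1 hδπ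
  refine ⟨δ, ⟨hδ_king, hδπ, ?_⟩, hτδ⟩
  rintro ⟨l, ε, hε, hδε, hεπ⟩
  have hε_mem : ⟨l, ε⟩ ∈ (kingsLT π).filter (Contains τ.2 ·.2) :=
    Finset.mem_filter.2 ⟨mem_kingsLT.2 ⟨hδ1.trans hδε.2.le, hε, hεπ⟩, hτδ.trans hδε.1⟩
  exact (hmax ⟨l, ε⟩ hε_mem).not_gt hδε.2

theorem mu_eq_zero_of_unique_cover_general (π : Equiv.Perm (Fin n))
    (h : ∃! s : Σ l : ℕ, Equiv.Perm (Fin l),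
      IsMaximalKingBelow s.2 π ∧ StrictContains p3142 s.2 ∧ StrictContains p2413 s.2) :
    kingMu n π = 0 := by
  obtain ⟨σ, ⟨⟨hσ, hσπ, -⟩, h3142, h2413⟩, huniq⟩ := h
  have hlength : 2 ≤ σ.1 := le_trans (by norm_num) h3142.2.le
  refine kingMu_eq_zero_of_forall_not_contains hσ hlength hσπ fun τ hτπ hτσ => ?_
  by_contra hμ
  obtain ⟨hτ1, hτ, -⟩ := mem_kingsLT.1 hτπ
  have hτ4 : 4 < τ.1 := hτ.four_lt_of_not_contains hτ1 h3142.1 h2413.1 hτσ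
  obtain ⟨hτ3142, hτ2413⟩ := contains_p3142_and_contains_p2413_of_kingMu_ne_zero hτ hτ4 hμ
  obtain ⟨δ, hδ, hτδ⟩ := exists_isMaximalKingBelow hτπ
  have hδ4 : 4 < δ.1 := hτ4.trans_le hτδ.length_le
  obtain rfl : δ = σ := huniq δ ⟨hδ, ⟨hτ3142.trans hτδ, hδ4⟩, hτ2413.trans hτδ, hδ4⟩
  exact hτσ hτδ

end Moebius

/-- if exactly one element of `C(π)` (the kings covered by `π`)
strictly contains both [3142] and [2413], then `μ(π) = 0`. -/
theorem mu_eq_zero_of_unique_cover (n : ℕ) (π : Equiv.Perm (Fin n)) (hπ : IsKing π)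
    (h : ∃! s : Σ l : ℕ, Equiv.Perm (Fin l),
      (IsKing s.2 ∧ StrictContains s.2 π ∧
        ¬ ∃ (l' : ℕ) (δ : Equiv.Perm (Fin l')),
          IsKing δ ∧ StrictContains s.2 δ ∧ StrictContains δ π) ∧
      StrictContains p3142 s.2 ∧ StrictContains p2413 s.2) :
    kingMu n π = 0 :=
  mu_eq_zero_of_unique_cover_general π h
end

section
/- For every π ∈ K_5, μ(π) = 1 if π ∈ ℍ, and μ(π) = 0 otherwise. -/
open Equiv

/-- The permutation [24153] (0-based one-line notation [1,3,0,4,2]). -/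
def p24153 : Equiv.Perm (Fin 5) :=
  ⟨![1, 3, 0, 4, 2], ![2, 0, 4, 1, 3], by intro x; fin_cases x <;> rfl, by intro x; fin_cases x <;> rfl⟩

/-- The permutation [35142] (0-based one-line notation [2,4,0,3,1]). -/
def p35142 : Equiv.Perm (Fin 5) :=
  ⟨![2, 4, 0, 3, 1], ![2, 4, 0, 3, 1], by intro x; fin_cases x <;> rfl, by intro x; fin_cases x <;> rfl⟩

/-- The permutation [42513] (0-based one-line notation [3,1,4,0,2]). -/
def p42513 : Equiv.Perm (Fin 5) :=
  ⟨![3, 1, 4, 0, 2], ![3, 1, 4, 0, 2], by intro x; fin_cases x <;> rfl, by intro x; fin_cases x <;> rfl⟩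

/-- The permutation [31524] (0-based one-line notation [2,0,4,1,3]). -/
def p31524 : Equiv.Perm (Fin 5) :=
  ⟨![2, 0, 4, 1, 3], ![1, 3, 0, 4, 2], by intro x; fin_cases x <;> rfl, by intro x; fin_cases x <;> rfl⟩

/-- The set ℍ = {[24153],[35142],[42513],[31524]}. -/
def Hset : Set (Equiv.Perm (Fin 5)) := {p24153, p35142, p42513, p31524}

/-!
The kings of length at most `4` are `[1]`, `[2413]` and `[3142]`, so `μ = -1` in length `4` and,
for `σ` of length `5`, `μ σ = -(1 - k)`, where `k` is the number of length-`4` kings contained in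
`σ`. A king of length `5` contains at least one of the two, and it contains both exactly when it
lies in `ℍ`. The patterns of `σ` with one entry fewer are exactly its deletions `nabla σ i`, which
reduces the last two facts to a finite check.
-/

section Deletion

variable {n : ℕ}

theorem succAbove_nabla (σ : Perm (Fin (n + 1))) (i : Fin (n + 1)) (a : Fin n) :
    (σ i).succAbove (nabla σ i a) = σ (i.succAbove a) := by
  have hne : σ (i.succAbove a) ≠ σ i := σ.injective.ne (i.succAbove_ne a)
  obtain ⟨b, hb⟩ := Fin.exists_succAbove_eq hne
  have hcomp :
      ((finSuccEquiv' i).symm.trans (σ.trans (finSuccEquiv' (σ i)))) (some a) = some b := by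
    simp only [trans_apply, finSuccEquiv'_symm_some, ← hb, finSuccEquiv'_succAbove]
  have hnabla : nabla σ i a = b :=
    Option.some_injective _ ((removeNone_some _ ⟨b, hcomp⟩).trans hcomp)
  rw [hnabla, hb]

theorem nabla_lt_nabla_iff {σ : Perm (Fin (n + 1))} {i : Fin (n + 1)} {a b : Fin n} :
    nabla σ i a < nabla σ i b ↔ σ (i.succAbove a) < σ (i.succAbove b) := by
  rw [← succAbove_nabla, ← succAbove_nabla, Fin.succAbove_lt_succAbove_iff]

theorem exists_eq_succAboveOrderEmb (f : Fin n ↪o Fin (n + 1)) :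
    ∃ i, f = Fin.succAboveOrderEmb i := by
  have hcard : (Set.range f)ᶜ.ncard = 1 := by
    rw [Set.ncard_compl, Set.ncard_range_of_injective f.injective]
    simp only [Nat.card_fin, Nat.add_sub_cancel_left]
  obtain ⟨i, hi⟩ := Set.ncard_eq_one.mp hcard
  refine ⟨i, OrderEmbedding.range_inj.mp ?_⟩
  rw [← compl_compl (Set.range f), hi]
  exact (Fin.range_succAbove i).symm

theorem perm_eq_of_lt_iff_lt {α : Type*} [LinearOrder α] [WellFoundedLT α] {π ρ : Perm α}
    (h : ∀ a b, π a < π b ↔ ρ a < ρ b) : π = ρ := by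
  have hmono : StrictMono (π.symm.trans ρ) := fun x y hxy => by
    simpa only [trans_apply, ← h, apply_symm_apply] using hxy
  have hid : hmono.orderIsoOfSurjective _ (π.symm.trans ρ).surjective = OrderIso.refl α :=
    Subsingleton.elim _ _
  ext a
  simpa using (congrArg (· (π a)) hid).symm

theorem contains_iff_exists_nabla_eq {π : Perm (Fin n)} {σ : Perm (Fin (n + 1))} :
    Contains π σ ↔ ∃ i, nabla σ i = π := by
  constructor
  · rintro ⟨f, hf⟩
    obtain ⟨i, rfl⟩ := exists_eq_succAboveOrderEmb f
    exact ⟨i, perm_eq_of_lt_iff_lt fun a b => nabla_lt_nabla_iff.trans (hf a b).symm⟩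
  · rintro ⟨i, rfl⟩
    exact ⟨Fin.succAboveOrderEmb i, fun _ _ => nabla_lt_nabla_iff⟩

end Deletion

instance {n : ℕ} (σ : Perm (Fin n)) : Decidable (IsKing σ) :=
  inferInstanceAs (Decidable (∀ i j : Fin n, (j : ℕ) = i + 1 → fdist (σ i) (σ j) ≠ 1))

instance {n : ℕ} (π : Perm (Fin n)) (σ : Perm (Fin (n + 1))) : Decidable (Contains π σ) :=
  decidable_of_iff' _ contains_iff_exists_nabla_eq

theorem not_isKing_two (τ : Perm (Fin 2)) : ¬IsKing τ := by
  revert τ; decide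

theorem not_isKing_three (τ : Perm (Fin 3)) : ¬IsKing τ := by
  revert τ; decide

theorem isKing_four_iff {τ : Perm (Fin 4)} : IsKing τ ↔ τ = p2413 ∨ τ = p3142 := by
  revert τ; decide +kernel

theorem contains_p2413_or_contains_p3142 {π : Perm (Fin 5)} (hπ : IsKing π) :
    Contains p2413 π ∨ Contains p3142 π := by
  revert π; decide +kernel

theorem mem_Hset_iff {π : Perm (Fin 5)} :
    π ∈ Hset ↔ IsKing π ∧ Contains p2413 π ∧ Contains p3142 π := by
  simp only [Hset, Set.mem_insert_iff, Set.mem_singleton_iff]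
  revert π; decide +kernel

section KingPatterns

variable {n : ℕ}

open scoped Classical in
/-- The king permutations of length `l` contained in `σ`. For `l` less than the length of `σ`, this
is the set of `τ` over which the recursion defining `μ σ` sums at level `l`. -/
noncomputable def kingPatterns (l : ℕ) (σ : Perm (Fin n)) : Finset (Perm (Fin l)) :=
  {τ | IsKing τ ∧ Contains τ σ}

theorem mem_kingPatterns {l : ℕ} {τ : Perm (Fin l)} {σ : Perm (Fin n)} :
    τ ∈ kingPatterns l σ ↔ IsKing τ ∧ Contains τ σ := by
  simp only [kingPatterns, Finset.mem_filter_univ]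

theorem kingMu_add_two (σ : Perm (Fin (n + 2))) :
    kingMu (n + 2) σ = -∑ l ∈ Finset.Ico 1 (n + 2), ∑ τ ∈ kingPatterns l σ, kingMu l τ := by
  rw [kingMu, ← Finset.sum_attach (Finset.Ico 1 (n + 2))]
  congr 1
  refine Finset.sum_congr rfl fun l _ => Finset.sum_congr ?_ fun _ _ => rfl
  have strictContains_iff (τ : Perm (Fin l)) : StrictContains τ σ ↔ Contains τ σ :=
    and_iff_left (Finset.mem_Ico.mp l.2).2
  ext τ
  simp only [Finset.mem_filter, Finset.mem_univ, true_and, mem_kingPatterns, strictContains_iff]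

theorem isKing_one (τ : Perm (Fin 1)) : IsKing τ := fun i j h => by omega

theorem contains_one (τ : Perm (Fin 1)) (σ : Perm (Fin (n + 1))) : Contains τ σ :=
  ⟨Fin.castLEOrderEmb (by omega), fun a b => by simp [Subsingleton.elim a b]⟩

theorem kingPatterns_one (σ : Perm (Fin (n + 1))) : kingPatterns 1 σ = {1} := by
  ext τ
  simp only [mem_kingPatterns, isKing_one, contains_one, Finset.mem_singleton,
    Subsingleton.elim τ 1, and_self]

theorem kingPatterns_two (σ : Perm (Fin n)) : kingPatterns 2 σ = ∅ :=
  Finset.eq_empty_of_forall_notMem fun τ hτ => not_isKing_two τ (mem_kingPatterns.mp hτ).1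

theorem kingPatterns_three (σ : Perm (Fin n)) : kingPatterns 3 σ = ∅ :=
  Finset.eq_empty_of_forall_notMem fun τ hτ => not_isKing_three τ (mem_kingPatterns.mp hτ).1

theorem p2413_ne_p3142 : p2413 ≠ p3142 := by decide

open scoped Classical in
theorem card_kingPatterns_four (σ : Perm (Fin n)) :
    (kingPatterns 4 σ).card =
      (if Contains p2413 σ then 1 else 0) + (if Contains p3142 σ then 1 else 0) := by
  have hfilter : kingPatterns 4 σ =
      ({p2413, p3142} : Finset (Perm (Fin 4))).filter (Contains · σ) := by
    ext τ
    rw [mem_kingPatterns, isKing_four_iff, Finset.mem_filter, Finset.mem_insert,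
      Finset.mem_singleton]
  rw [hfilter, Finset.card_filter, Finset.sum_pair p2413_ne_p3142]

theorem card_kingPatterns_four_of_mem_Hset {π : Perm (Fin 5)} (h : π ∈ Hset) :
    (kingPatterns 4 π).card = 2 := by
  obtain ⟨-, h2413, h3142⟩ := mem_Hset_iff.mp h
  rw [card_kingPatterns_four, if_pos h2413, if_pos h3142]

theorem card_kingPatterns_four_of_notMem_Hset {π : Perm (Fin 5)} (hπ : IsKing π)
    (h : π ∉ Hset) : (kingPatterns 4 π).card = 1 := by
  have hnot_both : ¬(Contains p2413 π ∧ Contains p3142 π) :=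
    fun hboth => h (mem_Hset_iff.mpr ⟨hπ, hboth⟩)
  rw [card_kingPatterns_four]
  rcases contains_p2413_or_contains_p3142 hπ with h2413 | h3142
  · rw [if_pos h2413, if_neg fun h3142 => hnot_both ⟨h2413, h3142⟩]
  · rw [if_neg fun h2413 => hnot_both ⟨h2413, h3142⟩, if_pos h3142]

theorem kingMu_one (τ : Perm (Fin 1)) : kingMu 1 τ = 1 := by
  rw [kingMu]

theorem sum_kingMu_kingPatterns_one (σ : Perm (Fin (n + 1))) :
    ∑ τ ∈ kingPatterns 1 σ, kingMu 1 τ = 1 := by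
  rw [kingPatterns_one, Finset.sum_singleton, kingMu_one]

theorem kingMu_four (τ : Perm (Fin 4)) : kingMu 4 τ = -1 := by
  have hlevels : Finset.Ico 1 4 = {1, 2, 3} := rfl
  rw [kingMu_add_two, hlevels]
  simp [sum_kingMu_kingPatterns_one, kingPatterns_two, kingPatterns_three]

theorem kingMu_five (σ : Perm (Fin 5)) : kingMu 5 σ = (kingPatterns 4 σ).card - 1 := by
  have hlevels : Finset.Ico 1 5 = {1, 2, 3, 4} := rfl
  rw [kingMu_add_two, hlevels]
  simp [sum_kingMu_kingPatterns_one, kingPatterns_two, kingPatterns_three, kingMu_four,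
    sub_eq_add_neg]

end KingPatterns

/-- for `π ∈ K_5`, `μ(π) = 1` if `π ∈ ℍ` and `μ(π) = 0` otherwise. -/
theorem mu_on_K5 (π : Equiv.Perm (Fin 5)) (hπ : IsKing π) :
    (π ∈ Hset → kingMu 5 π = 1) ∧ (π ∉ Hset → kingMu 5 π = 0) := by
  rw [kingMu_five]
  constructor <;> intro h
  · rw [card_kingPatterns_four_of_mem_Hset h]
    norm_num
  · rw [card_kingPatterns_four_of_notMem_Hset hπ h]
    norm_num
end
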